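/- arXiv:2001.08813 — 3 statements merged into one kernel-verified Lean document; each statement's English description precedes it below -/
import Mathlib

section
/- If P ∈ 𝒫(Z) is a local maximizer of the function Q ↦ B(Q,ℰ) on 𝒫(Z), then there is a constant c ∈ ℝ such that β_z'(P(z)) − β_z'(Π_P(z)) = c for every z ∈ supp(P). (Here Π_P(z) > 0 for every z ∈ supp(P), so all derivatives are defined.) -/
open Filter Topology

lemma aux_mono {b b' : ℝ → ℝ} (hsc : StrictConvexOn ℝ (Set.Ioi 0) b)
    (hd : ∀ x, 0 < x → HasDerivAt b (b' x) x) {x y : ℝ} (hx : 0 < x) (hxy : x < y) :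
    b' x < b' y := by
  have h1 := hsc.lt_slope_of_hasDerivAt (x := x) (y := y) hx (hx.trans hxy) hxy (hd x hx)
  have h2 := hsc.slope_lt_of_hasDerivAt (x := x) (y := y) hx (hx.trans hxy) hxy
    (hd y (hx.trans hxy))
  exact h1.trans h2

lemma aux_mono_le {b b' : ℝ → ℝ} (hsc : StrictConvexOn ℝ (Set.Ioi 0) b)
    (hd : ∀ x, 0 < x → HasDerivAt b (b' x) x) {x y : ℝ} (hx : 0 < x) (hxy : x ≤ y) :
    b' x ≤ b' y := by
  rcases hxy.lt_or_eq with h | h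
  · exact (aux_mono hsc hd hx h).le
  · rw [h]

lemma aux_tangent {b b' : ℝ → ℝ} (hc : ContinuousOn b (Set.Ici 0))
    (hsc : StrictConvexOn ℝ (Set.Ioi 0) b)
    (hd : ∀ x, 0 < x → HasDerivAt b (b' x) x) {p q : ℝ} (hp : 0 ≤ p) (hq : 0 < q) :
    b q + b' q * (p - q) ≤ b p := by
  have key : ∀ p, 0 < p → b q + b' q * (p - q) ≤ b p := by
    intro p hp
    rcases lt_trichotomy p q with h | h | h
    · have h2 := hsc.slope_lt_of_hasDerivAt (x := p) (y := q) hp hq h (hd q hq)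
      rw [slope_def_field, div_lt_iff₀ (by linarith)] at h2
      nlinarith
    · subst h; simp
    · have h2 := hsc.lt_slope_of_hasDerivAt (x := q) (y := p) hq hp h (hd q hq)
      rw [slope_def_field, lt_div_iff₀ (by linarith)] at h2
      nlinarith
  rcases hp.lt_or_eq with h | h
  · exact key p h
  · subst h
    have hb : Tendsto b (𝓝[>] 0) (𝓝 (b 0)) :=
      (hc 0 (by simp)).mono_left (nhdsWithin_mono _ Set.Ioi_subset_Ici_self)
    have hl : Tendsto (fun p => b q + b' q * (p - q)) (𝓝[>] 0) (𝓝 (b q + b' q * (0 - q))) := by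
      have : Continuous (fun p => b q + b' q * (p - q)) := by fun_prop
      exact (this.tendsto 0).mono_left nhdsWithin_le_nhds
    refine le_of_tendsto_of_tendsto hl hb ?_
    filter_upwards [self_mem_nhdsWithin] with x hx using key x hx

lemma aux_deriv {Z : Type} [Fintype Z] {β β' : Z → ℝ → ℝ}
    (hβd : ∀ z x, 0 < x → HasDerivAt (β z) (β' z x) x) {P v : Z → ℝ}
    (h : ∀ z, v z ≠ 0 → 0 < P z) :
    HasDerivAt (fun t : ℝ => ∑ z, β z (P z + t * v z)) (∑ z, β' z (P z) * v z) 0 := by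
  apply HasDerivAt.fun_sum
  intro z _
  by_cases hv : v z = 0
  · simp only [hv, mul_zero, add_zero]
    exact hasDerivAt_const _ _
  · have h1 : HasDerivAt (fun t : ℝ => P z + t * v z) (v z) 0 := by
      simpa using ((hasDerivAt_id (0:ℝ)).mul_const (v z)).const_add (P z)
    have h2 : HasDerivAt (β z) (β' z (P z)) (P z + 0 * v z) := by
      simpa using hβd z _ (h z hv)
    exact h2.comp (0:ℝ) h1

lemma aux_ev {Z : Type} [Fintype Z] {P v : Z → ℝ} (hP : ∀ z, 0 ≤ P z)
    (h : ∀ z, v z ≠ 0 → 0 < P z) :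
    ∀ᶠ t in 𝓝 (0:ℝ), ∀ z, 0 ≤ P z + t * v z := by
  rw [eventually_all]
  intro z
  by_cases hv : v z = 0
  · simp [hv, hP z]
  · have : Continuous (fun t : ℝ => P z + t * v z) := by fun_prop
    have h1 := (this.tendsto 0).eventually (lt_mem_nhds (a := 0) (by simpa using h z hv))
    exact h1.mono fun t ht => ht.le

/-- minimality along a segment forces positivity. -/
lemma aux_supp {Z : Type} [Fintype Z] {β β' : Z → ℝ → ℝ}
    (hβc : ∀ z, ContinuousOn (β z) (Set.Ici 0))
    (hβsc : ∀ z, StrictConvexOn ℝ (Set.Ioi 0) (β z))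
    (hβd : ∀ z x, 0 < x → HasDerivAt (β z) (β' z x) x)
    (hβ'bot : ∀ z, Tendsto (β' z) (𝓝[>] 0) atBot)
    {P Q : Z → ℝ} (hP : ∀ z, 0 ≤ P z) (hQ : ∀ z, 0 ≤ Q z)
    (hmin : ∀ t : ℝ, 0 < t → t < 1 → ∑ z, β z (Q z) ≤ ∑ z, β z (Q z + t * (P z - Q z)))
    (z0 : Z) (hz0 : 0 < P z0) : 0 < Q z0 := by
  classical
  by_contra hcon
  have hQ0 : Q z0 = 0 := le_antisymm (not_lt.mp hcon) (hQ z0)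
  have pos : ∀ t : ℝ, 0 < t → t < 1 → ∀ z, (0 < P z ∨ 0 < Q z) → 0 < Q z + t * (P z - Q z) := by
    intro t h0 h1 z h
    have e : Q z + t * (P z - Q z) = (1 - t) * Q z + t * P z := by ring
    rw [e]
    have := hP z; have := hQ z
    have h1' : 0 < 1 - t := by linarith
    rcases h with h | h
    · have := mul_pos h0 h; have := mul_nonneg h1'.le (hQ z); linarith
    · have := mul_pos h1' h; have := mul_nonneg h0.le (hP z); linarith
  -- derivative bound
  have A : ∀ t : ℝ, 0 < t → t < 1 →
      0 ≤ ∑ z, β' z (Q z + t * (P z - Q z)) * (P z - Q z) := by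
    intro t h0 h1
    have : 0 ≤ t * ∑ z, β' z (Q z + t * (P z - Q z)) * (P z - Q z) := by
      have h2 := hmin t h0 h1
      have h3 : ∑ z, β z (Q z + t * (P z - Q z)) ≤
          ∑ z, (β z (Q z) + t * (β' z (Q z + t * (P z - Q z)) * (P z - Q z))) := by
        apply Finset.sum_le_sum
        intro z _
        by_cases h : 0 < P z ∨ 0 < Q z
        · have := aux_tangent (hβc z) (hβsc z) (hβd z) (hQ z) (pos t h0 h1 z h)
          nlinarith
        · push Not at h
          have hp : P z = 0 := le_antisymm h.1 (hP z)
          have hq : Q z = 0 := le_antisymm h.2 (hQ z)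
          simp [hp, hq]
      rw [Finset.sum_add_distrib, ← Finset.mul_sum] at h3
      linarith
    exact nonneg_of_mul_nonneg_right this h0
  set C : Z → ℝ := fun z => max (β' z (max (P z) (Q z)) * (P z - Q z)) (β' z (Q z / 2) * (P z - Q z))
  have B : ∀ t : ℝ, 0 < t → t < 1/2 → ∀ z, z ≠ z0 →
      β' z (Q z + t * (P z - Q z)) * (P z - Q z) ≤ C z := by
    intro t h0 h1 z _
    by_cases h : 0 < P z ∨ 0 < Q z
    · have hpos := pos t h0 (by linarith) z h
      rcases le_total (Q z) (P z) with hle | hle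
      · refine le_trans ?_ (le_max_left _ _)
        apply mul_le_mul_of_nonneg_right _ (by linarith)
        apply aux_mono_le (hβsc z) (hβd z) hpos
        refine le_trans ?_ (le_max_left _ _)
        nlinarith
      · refine le_trans ?_ (le_max_right _ _)
        apply mul_le_mul_of_nonpos_right _ (by linarith)
        have hq : 0 < Q z := by rcases h with h | h <;> linarith
        apply aux_mono_le (hβsc z) (hβd z) (by linarith)
        have := hP z
        nlinarith
    · push Not at h
      have hp : P z = 0 := le_antisymm h.1 (hP z)
      have hq : Q z = 0 := le_antisymm h.2 (hQ z)
      simp [C, hp, hq]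
  have T : Tendsto (fun t : ℝ => β' z0 (t * P z0) * P z0) (𝓝[>] 0) atBot := by
    apply Tendsto.atBot_mul_const hz0
    apply (hβ'bot z0).comp
    rw [tendsto_nhdsWithin_iff]
    constructor
    · have : Continuous (fun t : ℝ => t * P z0) := by fun_prop
      simpa using (this.tendsto 0).mono_left nhdsWithin_le_nhds
    · filter_upwards [self_mem_nhdsWithin] with t ht using mul_pos ht hz0
  have T1 := T.eventually (eventually_lt_atBot (-(∑ z ∈ Finset.univ.erase z0, C z)))
  have T2 : ∀ᶠ t in 𝓝[>] (0:ℝ), t < 1/2 :=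
    nhdsWithin_le_nhds (gt_mem_nhds (by norm_num))
  obtain ⟨t, h1, h2, h3⟩ := (T1.and (T2.and self_mem_nhdsWithin)).exists
  have h3 : 0 < t := h3
  have hA := A t h3 (by linarith)
  rw [← Finset.add_sum_erase _ _ (Finset.mem_univ z0)] at hA
  have hB : ∑ z ∈ Finset.univ.erase z0, β' z (Q z + t * (P z - Q z)) * (P z - Q z) ≤
      ∑ z ∈ Finset.univ.erase z0, C z :=
    Finset.sum_le_sum fun z hz => B t h3 h2 z (Finset.ne_of_mem_erase hz)
  simp only [hQ0, zero_add, sub_zero] at hA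
  linarith

/-- Lagrange multipliers. -/
lemma aux_span {Z : Type} [Fintype Z] {d : ℕ} (f : Z → Fin d → ℝ) (g : Z → ℝ)
    (h : ∀ v : Z → ℝ, ∑ z, v z = 0 → (∀ i, ∑ z, v z * f z i = 0) → ∑ z, g z * v z = 0) :
    ∃ (θ : Fin d → ℝ) (r : ℝ), ∀ z, g z = (∑ i, θ i * f z i) - r := by
  classical
  let F : (Z → ℝ) → ((Z → ℝ) →ₗ[ℝ] ℝ) := fun w => ∑ z, w z • LinearMap.proj z
  have hF : ∀ w v, F w v = ∑ z, w z * v z := by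
    intro w v; simp [F]
  let L : Option (Fin d) → ((Z → ℝ) →ₗ[ℝ] ℝ) := fun o => F (fun z => o.elim 1 (fun i => f z i))
  have := mem_span_of_iInf_ker_le_ker (L := L) (K := F g) (by
    intro v hv
    simp only [Submodule.mem_iInf, LinearMap.mem_ker] at hv ⊢
    rw [hF]
    apply h
    · simpa [L, hF] using hv none
    · intro i
      simpa [L, hF, mul_comm] using hv (some i))
  rw [Submodule.mem_span_range_iff_exists_fun] at this
  obtain ⟨c, hc⟩ := this
  refine ⟨fun i => c (some i), - c none, fun z => ?_⟩
  have h1 := congrArg (fun l => l (Pi.single z 1)) hc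
  simp [L, hF, Fintype.sum_option, Pi.single_apply] at h1
  rw [← h1]; ring

theorem stmt_10 {Z : Type} [Fintype Z] [Nonempty Z] {d : ℕ}
    (β β' : Z → ℝ → ℝ)
    (hβc : ∀ z, ContinuousOn (β z) (Set.Ici 0))
    (hβsc : ∀ z, StrictConvexOn ℝ (Set.Ioi 0) (β z))
    (hβd : ∀ z x, 0 < x → HasDerivAt (β z) (β' z x) x)
    (hβ'bot : ∀ z, Filter.Tendsto (β' z) (nhdsWithin 0 (Set.Ioi 0)) Filter.atBot)
    (hβ'top : ∀ z, Filter.Tendsto (β' z) Filter.atTop Filter.atTop)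
    (e : Z → ℝ → ℝ)
    (he_pos : ∀ z r, 0 < e z r)
    (he_left : ∀ z r, β' z (e z r) = r)
    (he_right : ∀ z x, 0 < x → e z (β' z x) = x)
    (f : Z → Fin d → ℝ)
    (prob : Set (Z → ℝ))
    (hprob : prob = {P : Z → ℝ | (∀ z, 0 ≤ P z) ∧ (∑ z, P z) = 1})
    (μ : (Z → ℝ) → Fin d → ℝ)
    (hμ : ∀ P i, μ P i = ∑ z, P z * f z i)
    (H : (Z → ℝ) → ℝ)
    (hH : ∀ Q, H Q = ∑ z, β z (Q z))
    (Λ : (Fin d → ℝ) → ℝ)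
    (hΛ : ∀ θ, (∑ z, e z ((∑ i, θ i * f z i) - Λ θ)) = 1)
    (Pθ : (Fin d → ℝ) → Z → ℝ)
    (hPθ : ∀ θ z, Pθ θ z = e z ((∑ i, θ i * f z i) - Λ θ))
    (Bdiv : (Z → ℝ) → (Z → ℝ) → ℝ)
    (hBdiv : ∀ P Q, Bdiv P Q = ∑ z, (β z (P z) - β z (Q z) - β' z (Q z) * (P z - Q z)))
    (BE : (Z → ℝ) → ℝ)
    (hBE : ∀ P, BE P = ⨅ θ, Bdiv P (Pθ θ))
    (Pr : (Z → ℝ) → Z → ℝ)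
    (hPr : ∀ P ∈ prob, Pr P ∈ prob ∧ μ (Pr P) = μ P ∧
      (∀ Q ∈ prob, μ Q = μ P → H (Pr P) ≤ H Q) ∧
      (∀ Q ∈ prob, μ Q = μ P → H Q = H (Pr P) → Q = Pr P))
    (P : Z → ℝ) (hP : P ∈ prob)
    (hmax : IsLocalMaxOn BE prob P) :
    ∃ c : ℝ, ∀ z : Z, 0 < P z → 0 < Pr P z ∧ β' z (P z) - β' z (Pr P z) = c := by
  classical
  have memp : ∀ R, R ∈ prob ↔ (∀ z, 0 ≤ R z) ∧ (∑ z, R z) = 1 := by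
    intro R; rw [hprob]; rfl
  have mem1 : ∀ R ∈ prob, ∀ z, R z ≤ 1 := by
    intro R hR z
    rw [memp] at hR
    rw [← hR.2]
    exact Finset.single_le_sum (fun z _ => hR.1 z) (Finset.mem_univ z)
  have mconv : ∀ R S, R ∈ prob → S ∈ prob → ∀ t : ℝ, 0 ≤ t → t ≤ 1 →
      (fun z => R z + t * (S z - R z)) ∈ prob := by
    intro R S hR hS t h0 h1
    rw [memp] at *
    refine ⟨fun z => ?_, ?_⟩
    · have h2 := mul_nonneg (sub_nonneg.2 h1) (hR.1 z)
      have h3 := mul_nonneg h0 (hS.1 z)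
      show 0 ≤ R z + t * (S z - R z)
      linarith
    · rw [Finset.sum_add_distrib, ← Finset.mul_sum, Finset.sum_sub_distrib, hR.2, hS.2]; ring
  have μlin : ∀ (R v : Z → ℝ) (t : ℝ) i,
      μ (fun z => R z + t * v z) i = μ R i + t * μ v i := by
    intro R v t i
    simp only [hμ, Finset.mul_sum, ← Finset.sum_add_distrib]
    exact Finset.sum_congr rfl fun z _ => by ring
  have μsub : ∀ (R v : Z → ℝ) i,
      μ (fun z => R z - v z) i = μ R i - μ v i := by
    intro R v i
    simp only [hμ, ← Finset.sum_sub_distrib]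
    exact Finset.sum_congr rfl fun z _ => by ring
  -- support lemma
  have supp : ∀ R ∈ prob, ∀ z, 0 < R z → 0 < Pr R z := by
    intro R hR z hz
    obtain ⟨h1, h2, h3, h4⟩ := hPr R hR
    refine aux_supp hβc hβsc hβd hβ'bot ((memp R).1 hR).1 ((memp _).1 h1).1 ?_ z hz
    intro t t0 t1
    have := h3 _ (mconv _ _ h1 hR t t0.le t1.le) (by
      funext i
      rw [μlin, μsub, h2]; ring)
    rwa [hH, hH] at this
  have Ppos : ∀ θ z, 0 < Pθ θ z := by intro θ z; rw [hPθ]; exact he_pos _ _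
  have Psum : ∀ θ, ∑ z, Pθ θ z = 1 := by intro θ; simp only [hPθ]; exact hΛ θ
  have Pder : ∀ θ z, β' z (Pθ θ z) = (∑ i, θ i * f z i) - Λ θ := by
    intro θ z; rw [hPθ, he_left]
  have lin0 : ∀ θ (v : Z → ℝ), ∑ z, v z = 0 → (∀ i, ∑ z, v z * f z i = 0) →
      ∑ z, β' z (Pθ θ z) * v z = 0 := by
    intro θ v h1 h2
    simp only [Pder, sub_mul, Finset.sum_sub_distrib, ← Finset.mul_sum, h1, Finset.sum_mul]
    rw [Finset.sum_comm]
    have : ∀ i, ∑ z, θ i * f z i * v z = 0 := by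
      intro i
      rw [← mul_zero (θ i), ← h2 i, Finset.mul_sum]
      exact Finset.sum_congr rfl fun z _ => by ring
    simp [this]
  have Bexp : ∀ R S, Bdiv R S = H R - H S - ∑ z, β' z (S z) * (R z - S z) := by
    intro R S
    rw [hBdiv, hH, hH, Finset.sum_sub_distrib, Finset.sum_sub_distrib]
  -- weak duality
  have weak0 : ∀ R S, R ∈ prob → S ∈ prob → μ R = μ S → ∀ θ, H R - H S ≤ Bdiv R (Pθ θ) := by
    intro R S hR hS hRS θ
    have h1 : 0 ≤ Bdiv S (Pθ θ) := by
      rw [hBdiv]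
      refine Finset.sum_nonneg fun z _ => ?_
      have := aux_tangent (hβc z) (hβsc z) (hβd z) (((memp S).1 hS).1 z) (Ppos θ z)
      linarith
    have h2 := lin0 θ (fun z => R z - S z)
      (by rw [Finset.sum_sub_distrib, ((memp R).1 hR).2, ((memp S).1 hS).2, sub_self])
      (fun i => by
        have := μsub R S i
        rw [hμ, hRS, sub_self] at this
        exact this)
    rw [Bexp] at h1 ⊢
    have h3 : ∑ z, β' z (Pθ θ z) * (R z - Pθ θ z) = ∑ z, β' z (Pθ θ z) * (R z - S z)
        + ∑ z, β' z (Pθ θ z) * (S z - Pθ θ z) := by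
      rw [← Finset.sum_add_distrib]
      exact Finset.sum_congr rfl fun z _ => by ring
    linarith
  have weak : ∀ R S, R ∈ prob → S ∈ prob → μ R = μ S → H R - H S ≤ BE R := by
    intro R S hR hS hRS
    rw [hBE]
    exact le_ciInf (weak0 R S hR hS hRS)
  obtain ⟨hQ, hQμ, hQmin, hQuniq⟩ := hPr P hP
  set Q := Pr P with hQdef
  have hPQ : ∀ z, 0 < P z → 0 < Q z := supp P hP
  -- full support projections are in the family
  have lag : ∀ R ∈ prob, (∀ z, 0 < R z) → ∃ θ, Pr R = Pθ θ := by
    intro R hR hpos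
    obtain ⟨h1, h2, h3, h4⟩ := hPr R hR
    have hp : ∀ z, 0 < Pr R z := fun z => supp R hR z (hpos z)
    obtain ⟨θ, r, hg⟩ := aux_span f (fun z => β' z (Pr R z)) (by
      intro v hv hvf
      have hd := aux_deriv hβd (P := Pr R) (v := v) (fun z _ => hp z)
      refine IsLocalMin.hasDerivAt_eq_zero ?_ hd
      filter_upwards [aux_ev ((memp _).1 h1).1 (v := v) (fun z _ => hp z)] with t ht
      have := h3 (fun z => Pr R z + t * v z) ((memp _).2 ⟨ht, by
        rw [Finset.sum_add_distrib, ← Finset.mul_sum, hv, ((memp _).1 h1).2]; ring⟩) (by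
          funext i
          rw [μlin, h2, hμ v, hvf]; ring)
      rw [hH, hH] at this
      simpa using this)
    refine ⟨θ, ?_⟩
    have hz : ∀ z, Pr R z = e z ((∑ i, θ i * f z i) - r) := by
      intro z
      rw [← hg z, he_right z _ (hp z)]
    have emono : ∀ z a b, a < b → e z a < e z b := by
      intro z a b hab
      by_contra hcon
      have := aux_mono_le (hβsc z) (hβd z) (he_pos z b) (not_lt.1 hcon)
      rw [he_left, he_left] at this
      linarith
    have hr : r = Λ θ := by
      have hs := ((memp _).1 h1).2
      simp only [hz] at hs
      have hs' := hΛ θ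
      rcases lt_trichotomy r (Λ θ) with h | h | h
      · have := Finset.sum_lt_sum_of_nonempty (s := Finset.univ) Finset.univ_nonempty
          (fun z _ => emono z ((∑ i, θ i * f z i) - Λ θ) ((∑ i, θ i * f z i) - r) (by linarith))
        linarith
      · exact h
      · have := Finset.sum_lt_sum_of_nonempty (s := Finset.univ) Finset.univ_nonempty
          (fun z _ => emono z ((∑ i, θ i * f z i) - r) ((∑ i, θ i * f z i) - Λ θ) (by linarith))
        linarith
    funext z
    rw [hz, hPθ, hr]
  -- H is continuous on prob
  have Hcont : ∀ (u : ℕ → Z → ℝ) (R : Z → ℝ), (∀ n, u n ∈ prob) → R ∈ prob →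
      Tendsto u atTop (𝓝 R) → Tendsto (fun n => H (u n)) atTop (𝓝 (H R)) := by
    intro u R hu hR hlim
    simp only [hH]
    apply tendsto_finsetSum
    intro z _
    have h1 : Tendsto (fun n => u n z) atTop (𝓝[Set.Ici 0] (R z)) := by
      rw [tendsto_nhdsWithin_iff]
      exact ⟨(tendsto_pi_nhds.1 hlim) z, Eventually.of_forall fun n => ((memp _).1 (hu n)).1 z⟩
    exact (hβc z (R z) (((memp R).1 hR).1 z)).tendsto.comp h1
  -- strong duality
  have strong : BE P ≤ H P - H Q := by
    let U : Z → ℝ := Pθ 0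
    have hU : U ∈ prob := (memp _).2 ⟨fun z => (Ppos 0 z).le, Psum 0⟩
    let ε : ℕ → ℝ := fun n => 1 / ((n : ℝ) + 1)
    have ε0 : ∀ n, 0 < ε n := fun n => by positivity
    have ε1 : ∀ n, ε n ≤ 1 := fun n => by
      show 1 / ((n : ℝ) + 1) ≤ 1
      rw [div_le_one (by positivity)]
      have : (0:ℝ) ≤ n := by positivity
      linarith
    have εlim : Tendsto ε atTop (𝓝 0) := tendsto_one_div_add_atTop_nhds_zero_nat
    let mix : (Z → ℝ) → ℕ → Z → ℝ := fun R n z => R z + ε n * (U z - R z)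
    have mixp : ∀ R ∈ prob, ∀ n, mix R n ∈ prob := fun R hR n =>
      mconv R U hR hU (ε n) (ε0 n).le (ε1 n)
    have mixpos : ∀ n z, 0 < mix P n z := by
      intro n z
      have h1 := mul_nonneg (sub_nonneg.2 (ε1 n)) (((memp P).1 hP).1 z)
      have h2 := mul_pos (ε0 n) (Ppos 0 z)
      show 0 < P z + ε n * (Pθ 0 z - P z)
      linarith
    have mixμ : ∀ R n i, μ (mix R n) i = μ R i + ε n * (μ U i - μ R i) := by
      intro R n i
      show μ (fun z => R z + ε n * (U z - R z)) i = _
      rw [μlin, μsub]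
    have mixlim : ∀ R, Tendsto (mix R) atTop (𝓝 R) := by
      intro R
      rw [tendsto_pi_nhds]
      intro z
      simpa [mix] using (εlim.mul_const (U z - R z)).const_add (R z)
    let q : ℕ → Z → ℝ := fun n => Pr (mix P n)
    have hq : ∀ n, q n ∈ prob := fun n => (hPr _ (mixp P hP n)).1
    have hqμ : ∀ n, μ (q n) = μ (mix P n) := fun n => (hPr _ (mixp P hP n)).2.1
    have hqle : ∀ n, H (q n) ≤ H (mix Q n) := fun n =>
      (hPr _ (mixp P hP n)).2.2.1 _ (mixp Q hQ n) (by
        funext i; rw [mixμ, mixμ, hQμ])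
    have hcomp : IsCompact prob := by
      have : prob = stdSimplex ℝ Z := by rw [hprob]; rfl
      rw [this]; exact isCompact_stdSimplex ℝ Z
    obtain ⟨R, hR, φ, hφ, hlim⟩ := hcomp.tendsto_subseq hq
    have hHlim := Hcont _ R (fun n => hq (φ n)) hR hlim
    have hμR : μ R = μ P := by
      funext i
      have h1 : Tendsto (fun n => μ (q (φ n)) i) atTop (𝓝 (μ R i)) := by
        simp only [hμ]
        exact tendsto_finsetSum _ fun z _ => ((tendsto_pi_nhds.1 hlim) z).mul_const _
      have h2 : Tendsto (fun n => μ (q (φ n)) i) atTop (𝓝 (μ P i)) := by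
        simp only [hqμ, mixμ]
        simpa using ((εlim.comp hφ.tendsto_atTop).mul_const (μ U i - μ P i)).const_add (μ P i)
      exact tendsto_nhds_unique h1 h2
    have hRQ : R = Q := by
      refine hQuniq R hR hμR (le_antisymm ?_ (hQmin R hR hμR))
      exact le_of_tendsto_of_tendsto hHlim
        (Hcont _ Q (fun n => mixp Q hQ (φ n)) hQ ((mixlim Q).comp hφ.tendsto_atTop))
        (Eventually.of_forall fun n => hqle (φ n))
    subst hRQ
    let C : ℝ := ∑ z, (U z * β' z 1 - P z * β' z (Q z / 2))
    have hev : ∀ᶠ n in atTop, ∀ z, 0 < P z → Q z / 2 ≤ q (φ n) z := by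
      rw [eventually_all]
      intro z
      by_cases hz : 0 < P z
      · have h1 : Q z / 2 < Q z := by have := hPQ z hz; linarith
        filter_upwards [((tendsto_pi_nhds.1 hlim) z).eventually (lt_mem_nhds h1)] with n hn _
        exact hn.le
      · exact Eventually.of_forall fun n h => absurd h hz
    have hbound : ∀ᶠ n in atTop, BE P ≤ H P - H (q (φ n)) + ε (φ n) * C := by
      filter_upwards [hev] with n hn
      obtain ⟨θ, hθ⟩ := lag _ (mixp P hP (φ n)) (mixpos (φ n))
      have hqθ : q (φ n) = Pθ θ := hθ
      have h1 : BE P ≤ Bdiv P (Pθ θ) := by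
        rw [hBE]
        refine ciInf_le ⟨H P - H Q, ?_⟩ θ
        rintro _ ⟨θ', rfl⟩
        exact weak0 P Q hP hQ hQμ.symm θ'
      refine h1.trans ?_
      have hq' := hq (φ n)
      have hqμ' := hqμ (φ n)
      rw [hqθ] at hn hq' hqμ' ⊢
      have h2 := lin0 θ (fun z => mix P (φ n) z - Pθ θ z)
        (by rw [Finset.sum_sub_distrib, ((memp _).1 (mixp P hP (φ n))).2, Psum, sub_self])
        (fun i => by
          have := μsub (mix P (φ n)) (Pθ θ) i
          rw [hμ, hqμ', sub_self] at this
          exact this)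
      have h3 : ∑ z, β' z (Pθ θ z) * (P z - Pθ θ z) =
          ∑ z, β' z (Pθ θ z) * (mix P (φ n) z - Pθ θ z)
          - ε (φ n) * ∑ z, β' z (Pθ θ z) * (U z - P z) := by
        rw [Finset.mul_sum, ← Finset.sum_sub_distrib]
        refine Finset.sum_congr rfl fun z _ => ?_
        show _ = β' z (Pθ θ z) * (P z + ε (φ n) * (U z - P z) - Pθ θ z) - _
        ring
      have h4 : ∑ z, β' z (Pθ θ z) * (U z - P z) ≤ C := by
        refine Finset.sum_le_sum fun z _ => ?_
        have h5 : β' z (Pθ θ z) ≤ β' z 1 :=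
          aux_mono_le (hβsc z) (hβd z) (Ppos θ z) (mem1 _ hq' z)
        have h6 := mul_le_mul_of_nonneg_left h5 (Ppos 0 z).le
        have h7 : P z * β' z (Q z / 2) ≤ P z * β' z (Pθ θ z) := by
          rcases (((memp P).1 hP).1 z).lt_or_eq with h | h
          · apply mul_le_mul_of_nonneg_left _ h.le
            exact aux_mono_le (hβsc z) (hβd z) (half_pos (hPQ z h)) (hn z h)
          · rw [← h]; simp
        change Pθ 0 z * _ ≤ U z * β' z 1 at h6
        change β' z (Pθ θ z) * (Pθ 0 z - P z) ≤ _
        linarith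
      have h8 := mul_le_mul_of_nonneg_left h4 (ε0 (φ n)).le
      rw [Bexp]
      linarith
    refine ge_of_tendsto ?_ hbound
    have := (hHlim.const_sub (H P)).add ((εlim.comp hφ.tendsto_atTop).mul_const C)
    simpa using this
  -- conclusion
  have pair : ∀ a b, 0 < P a → 0 < P b →
      β' a (P a) - β' a (Q a) = β' b (P b) - β' b (Q b) := by
    intro a b ha hb
    let v : Z → ℝ := fun z => (if z = a then 1 else 0) - (if z = b then 1 else 0)
    have hv : ∑ z, v z = 0 := by simp [v]
    have hvP : ∀ z, v z ≠ 0 → 0 < P z := by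
      intro z hz
      by_cases h1 : z = a
      · rw [h1]; exact ha
      · by_cases h2 : z = b
        · rw [h2]; exact hb
        · simp [v, h1, h2] at hz
    have hvQ : ∀ z, v z ≠ 0 → 0 < Q z := fun z hz => hPQ z (hvP z hz)
    have hd := (aux_deriv hβd hvP).sub (aux_deriv hβd hvQ)
    have hp' := (memp P).1 hP
    have hq' := (memp Q).1 hQ
    have hsum : ∀ R : Z → ℝ, ∑ z, R z = 1 → ∀ t : ℝ, ∑ z, (R z + t * v z) = 1 := by
      intro R hR t
      rw [Finset.sum_add_distrib, ← Finset.mul_sum, hv, hR]; ring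
    have hcont : Continuous (fun t : ℝ => (fun z => P z + t * v z)) := by fun_prop
    have hev1 := aux_ev hp'.1 hvP
    have hev2 := aux_ev hq'.1 hvQ
    have htend : Tendsto (fun t : ℝ => (fun z => P z + t * v z)) (𝓝 0) (𝓝[prob] P) := by
      rw [tendsto_nhdsWithin_iff]
      refine ⟨by simpa using hcont.tendsto 0, ?_⟩
      filter_upwards [hev1] with t ht
      exact (memp _).2 ⟨ht, hsum P hp'.2 t⟩
    have hev3 := htend.eventually hmax
    have hz := IsLocalMax.hasDerivAt_eq_zero (by
      filter_upwards [hev1, hev2, hev3] with t h1 h2 h3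
      have h4 := weak (fun z => P z + t * v z) (fun z => Q z + t * v z)
        ((memp _).2 ⟨h1, hsum P hp'.2 t⟩) ((memp _).2 ⟨h2, hsum Q hq'.2 t⟩)
        (by funext i; rw [μlin, μlin, hQμ])
      have h5 : H (fun z => P z + t * v z) - H (fun z => Q z + t * v z) ≤ H P - H Q :=
        h4.trans (h3.trans strong)
      simp only [hH] at h5
      simpa using h5) hd
    simp only [v, mul_sub, Finset.sum_sub_distrib, mul_ite, mul_one, mul_zero,
      Finset.sum_ite_eq', Finset.mem_univ, if_true] at hz
    linarith
  by_cases hex : ∃ a, 0 < P a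
  · obtain ⟨a, ha⟩ := hex
    exact ⟨β' a (P a) - β' a (Q a), fun z hz => ⟨hPQ z hz, pair z a hz ha⟩⟩
  · push Not at hex
    exact ⟨0, fun z hz => absurd hz (not_lt.2 (hex z))⟩
end

section
/- If P ∈ 𝒫(Z) is a global maximizer of Q ↦ B(Q,ℰ) over 𝒫(Z), then |supp(P)| ≤ dim ℰ + 1, where dim ℰ denotes the dimension of the affine hull of {f(z) : z ∈ Z} in ℝ^d. -/
theorem tangent_aux (b b' : ℝ → ℝ) (hc : ContinuousOn b (Set.Ici 0))
    (hsc : StrictConvexOn ℝ (Set.Ioi 0) b)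
    (hd : ∀ x, 0 < x → HasDerivAt b (b' x) x) (p q : ℝ) (hp : 0 ≤ p) (hq : 0 < q) :
    0 ≤ b p - b q - b' q * (p - q) := by
  have key : ∀ p, 0 < p → 0 ≤ b p - b q - b' q * (p - q) := by
    intro p hp
    rcases lt_trichotomy p q with h | h | h
    · have := hsc.convexOn.slope_le_of_hasDerivAt (x := p) (y := q) hp hq h (hd q hq)
      rw [slope_def_field, div_le_iff₀ (by linarith)] at this
      linarith
    · subst h; simp
    · have := hsc.convexOn.le_slope_of_hasDerivAt (x := q) (y := p) hq hp h (hd q hq)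
      rw [slope_def_field, le_div_iff₀ (by linarith)] at this
      linarith
  rcases hp.eq_or_lt with h | h
  · subst h
    have hcont : ContinuousWithinAt (fun p => b p - b q - b' q * (p - q)) (Set.Ioi 0) 0 := by
      have h0 : ContinuousWithinAt b (Set.Ioi 0) 0 :=
        (hc 0 (by simp)).mono Set.Ioi_subset_Ici_self
      fun_prop
    refine ge_of_tendsto hcont ?_
    filter_upwards [self_mem_nhdsWithin] with x hx using key x hx
  · exact key p h

theorem stmt_12 {Z : Type} [Fintype Z] [Nonempty Z] {d : ℕ}
    (β β' : Z → ℝ → ℝ)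
    (hβc : ∀ z, ContinuousOn (β z) (Set.Ici 0))
    (hβsc : ∀ z, StrictConvexOn ℝ (Set.Ioi 0) (β z))
    (hβd : ∀ z x, 0 < x → HasDerivAt (β z) (β' z x) x)
    (hβ'bot : ∀ z, Filter.Tendsto (β' z) (nhdsWithin 0 (Set.Ioi 0)) Filter.atBot)
    (hβ'top : ∀ z, Filter.Tendsto (β' z) Filter.atTop Filter.atTop)
    (e : Z → ℝ → ℝ)
    (he_pos : ∀ z r, 0 < e z r)
    (he_left : ∀ z r, β' z (e z r) = r)
    (he_right : ∀ z x, 0 < x → e z (β' z x) = x)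
    (f : Z → Fin d → ℝ)
    (prob : Set (Z → ℝ))
    (hprob : prob = {P : Z → ℝ | (∀ z, 0 ≤ P z) ∧ (∑ z, P z) = 1})
    (μ : (Z → ℝ) → Fin d → ℝ)
    (hμ : ∀ P i, μ P i = ∑ z, P z * f z i)
    (Λ : (Fin d → ℝ) → ℝ)
    (hΛ : ∀ θ, (∑ z, e z ((∑ i, θ i * f z i) - Λ θ)) = 1)
    (Pθ : (Fin d → ℝ) → Z → ℝ)
    (hPθ : ∀ θ z, Pθ θ z = e z ((∑ i, θ i * f z i) - Λ θ))
    (Bdiv : (Z → ℝ) → (Z → ℝ) → ℝ)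
    (hBdiv : ∀ P Q, Bdiv P Q = ∑ z, (β z (P z) - β z (Q z) - β' z (Q z) * (P z - Q z)))
    (BE : (Z → ℝ) → ℝ)
    (hBE : ∀ P, BE P = ⨅ θ, Bdiv P (Pθ θ))
    (P : Z → ℝ) (hP : P ∈ prob)
    (hmax : ∀ Q ∈ prob, BE Q ≤ BE P) :
    {z : Z | 0 < P z}.ncard ≤ Module.finrank ℝ (affineSpan ℝ (Set.range f)).direction + 1 := by
  classical
  subst hprob
  obtain ⟨hP0, hP1⟩ := hP
  -- nonnegativity of the divergence
  have hnn : ∀ Q : Z → ℝ, (∀ z, 0 ≤ Q z) → ∀ θ, 0 ≤ Bdiv Q (Pθ θ) := by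
    intro Q hQ θ
    rw [hBdiv]
    refine Finset.sum_nonneg fun z _ => ?_
    exact tangent_aux (β z) (β' z) (hβc z) (hβsc z) (hβd z) _ _ (hQ z)
      (by rw [hPθ]; exact he_pos _ _)
  -- difference of divergences
  have hdiff : ∀ Q : Z → ℝ, (∑ z, Q z) = 1 → (∀ i, ∑ z, Q z * f z i = ∑ z, P z * f z i) →
      ∀ θ, Bdiv Q (Pθ θ) = Bdiv P (Pθ θ) + (∑ z, β z (Q z) - ∑ z, β z (P z)) := by
    intro Q hQ1 hQμ θ
    have h1 : ∑ z, ((∑ i, θ i * f z i) - Λ θ) * (Q z - P z) = 0 := by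
      have : ∀ z, ((∑ i, θ i * f z i) - Λ θ) * (Q z - P z)
          = (∑ i, θ i * (Q z * f z i - P z * f z i)) - Λ θ * (Q z - P z) := by
        intro z
        rw [sub_mul, Finset.sum_mul]
        congr 1
        exact Finset.sum_congr rfl fun i _ => by ring
      simp_rw [this]
      rw [Finset.sum_sub_distrib, Finset.sum_comm, ← Finset.mul_sum, Finset.sum_sub_distrib,
        hQ1, hP1]
      simp_rw [← Finset.mul_sum, Finset.sum_sub_distrib, hQμ]
      simp
    rw [hBdiv, hBdiv, ← Finset.sum_sub_distrib, ← Finset.sum_add_distrib, ← sub_eq_zero,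
      ← Finset.sum_sub_distrib, ← neg_eq_zero, ← Finset.sum_neg_distrib, ← h1]
    refine Finset.sum_congr rfl fun z _ => ?_
    have : β' z (Pθ θ z) = (∑ i, θ i * f z i) - Λ θ := by rw [hPθ, he_left]
    rw [this]; ring
  have hle : ∀ Q : Z → ℝ, (∀ z, 0 ≤ Q z) → (∑ z, Q z) = 1 →
      (∀ i, ∑ z, Q z * f z i = ∑ z, P z * f z i) → ∑ z, β z (Q z) ≤ ∑ z, β z (P z) := by
    intro Q hQ0 hQ1 hQμ
    have h := hmax Q ⟨hQ0, hQ1⟩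
    rw [hBE, hBE] at h
    simp_rw [hdiff Q hQ1 hQμ] at h
    have hb : BddBelow (Set.range fun θ => Bdiv P (Pθ θ)) :=
      ⟨0, by rintro _ ⟨θ, rfl⟩; exact hnn P hP0 θ⟩
    rw [← ciInf_add hb] at h
    linarith
  -- main perturbation
  have hpert : ∀ v : Z → ℝ, (∀ z, v z ≠ 0 → 0 < P z) → (∑ z, v z = 0) →
      (∀ i, ∑ z, v z * f z i = 0) → ∀ z, v z = 0 := by
    intro v hvs hv0 hvf z0
    by_contra hz0
    have hev : ∀ᶠ ε in nhdsWithin (0:ℝ) (Set.Ioi 0), ∀ z, 0 < P z →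
        0 < P z + ε * v z ∧ 0 < P z - ε * v z := by
      apply Filter.Eventually.filter_mono nhdsWithin_le_nhds
      rw [Filter.eventually_all]
      intro z
      by_cases hz : 0 < P z
      · have c1 : ContinuousAt (fun ε : ℝ => P z + ε * v z) 0 := by fun_prop
        have c2 : ContinuousAt (fun ε : ℝ => P z - ε * v z) 0 := by fun_prop
        filter_upwards [c1.eventually_const_lt (u := 0) (by simpa using hz),
          c2.eventually_const_lt (u := 0) (by simpa using hz)] with ε h1 h2 _
        exact ⟨h1, h2⟩
      · exact Filter.Eventually.of_forall fun _ h => absurd h hz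
    obtain ⟨ε, hε, hεpos⟩ := (hev.and self_mem_nhdsWithin).exists
    have hεpos : 0 < ε := hεpos
    have hzero : ∀ z, ¬ 0 < P z → v z = 0 := fun z h => by
      by_contra h'; exact h (hvs z h')
    have e1 := hle (fun z => P z + ε * v z)
      (fun z => by
        by_cases h : 0 < P z
        · exact (hε z h).1.le
        · simp [hzero z h, hP0 z])
      (by rw [Finset.sum_add_distrib, ← Finset.mul_sum, hv0, hP1]; simp)
      (fun i => by
        simp_rw [add_mul, mul_assoc]
        rw [Finset.sum_add_distrib, ← Finset.mul_sum, hvf]; simp)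
    have e2 := hle (fun z => P z - ε * v z)
      (fun z => by
        by_cases h : 0 < P z
        · exact (hε z h).2.le
        · simp [hzero z h, hP0 z])
      (by rw [Finset.sum_sub_distrib, ← Finset.mul_sum, hv0, hP1]; simp)
      (fun i => by
        simp_rw [sub_mul, mul_assoc]
        rw [Finset.sum_sub_distrib, ← Finset.mul_sum, hvf]; simp)
    have hstrict : ∀ z, v z ≠ 0 →
        2 * β z (P z) < β z (P z + ε * v z) + β z (P z - ε * v z) := by
      intro z hz
      have hp := hε z (hvs z hz)
      have hne : P z + ε * v z ≠ P z - ε * v z := by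
        intro h
        have : ε * v z = 0 := by linarith
        exact (mul_ne_zero hεpos.ne' hz) this
      have := (hβsc z).2 hp.1 hp.2 hne
        (show (0:ℝ) < 1/2 by norm_num) (show (0:ℝ) < 1/2 by norm_num) (by norm_num)
      simp only [smul_eq_mul] at this
      have h2 : 1/2 * (P z + ε * v z) + 1/2 * (P z - ε * v z) = P z := by ring
      rw [h2] at this
      linarith
    have hsum : ∑ z, 2 * β z (P z) < ∑ z, (β z (P z + ε * v z) + β z (P z - ε * v z)) := by
      refine Finset.sum_lt_sum (fun z _ => ?_) ⟨z0, Finset.mem_univ _, hstrict z0 hz0⟩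
      by_cases h : v z = 0
      · simp [h, two_mul]
      · exact (hstrict z h).le
    rw [← Finset.mul_sum, Finset.sum_add_distrib] at hsum
    linarith
  have hind : AffineIndependent ℝ (fun z : {z : Z // 0 < P z} => f z) := by
    rw [affineIndependent_iff]
    intro s w hw hwf j hj
    have hsw : ∀ g : Z → ℝ, ∑ z, (∑ i ∈ s, if (i : Z) = z then w i else 0) * g z
        = ∑ i ∈ s, w i * g i := by
      intro g
      simp_rw [Finset.sum_mul]
      rw [Finset.sum_comm]
      simp
    have := hpert (fun z => ∑ i ∈ s, if (i : Z) = z then w i else 0)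
      (fun z hz => by
        obtain ⟨i, _, hi⟩ := Finset.exists_ne_zero_of_sum_ne_zero hz
        have : (i : Z) = z := by
          by_contra h; simp [h] at hi
        rw [← this]; exact i.2)
      (by simpa [hw] using hsw (fun _ => 1))
      (fun k => by
        rw [hsw (fun z => f z k)]
        simpa using congrFun hwf k) j
    simpa [Subtype.coe_inj, hj] using this
  have hcard := hind.card_le_finrank_succ
  rw [Set.ncard_eq_toFinset_card', Set.toFinset_card]
  refine (le_of_eq (Fintype.card_congr (Equiv.refl _))).trans (hcard.trans ?_)
  rw [direction_affineSpan]
  gcongr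
  apply Submodule.finrank_mono
  apply vectorSpan_mono
  rintro _ ⟨z, rfl⟩
  exact ⟨z, rfl⟩
end

section
/- Let u ∈ N(f) \ {0} and let P ∈ cl(𝒫_u^+) satisfy B_u(P) = B̄(u). Then B(P,ℰ) ≥ B̄(u), and equality B(P,ℰ) = B̄(u) holds if and only if P − Π_P = λ·u for some λ > 0. -/
theorem aux_conv {b b' : ℝ → ℝ} (hc : ContinuousOn b (Set.Ici 0))
    (hs : StrictConvexOn ℝ (Set.Ioi 0) b) (hd : ∀ x, 0 < x → HasDerivAt b (b' x) x) :
    ConvexOn ℝ (Set.Ici 0) b := by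
  apply MonotoneOn.convexOn_of_deriv (convex_Ici 0) hc
  · rw [interior_Ici]
    intro x hx
    exact (hd x hx).differentiableAt.differentiableWithinAt
  · rw [interior_Ici]
    exact hs.convexOn.monotoneOn_deriv (fun x hx => (hd x hx).differentiableAt)

theorem aux_tan {b b' : ℝ → ℝ} (hc : ConvexOn ℝ (Set.Ici 0) b)
    (hd : ∀ x, 0 < x → HasDerivAt b (b' x) x) {p q : ℝ} (hp : 0 ≤ p) (hq : 0 < q) :
    0 ≤ b p - b q - b' q * (p - q) := by
  rcases lt_trichotomy p q with h | h | h
  · have := hc.slope_le_of_hasDerivAt (Set.mem_Ici.2 hp) (Set.mem_Ici.2 hq.le) h (hd q hq)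
    rw [slope_def_field, div_le_iff₀ (by linarith)] at this
    linarith
  · subst h; simp
  · have := hc.le_slope_of_hasDerivAt (Set.mem_Ici.2 hq.le) (Set.mem_Ici.2 hp) h (hd q hq)
    rw [slope_def_field, le_div_iff₀ (by linarith)] at this
    linarith

open scoped Pointwise in
theorem aux_dual {Z : Type} [Fintype Z] {d : ℕ} (K : Set (Z → ℝ)) (hK : IsCompact K)
    (f : Z → Fin d → ℝ) (H : (Z → ℝ) → ℝ) (hHc : ContinuousOn H K) (hHx : ConvexOn ℝ K H)
    (P : Z → ℝ) (hP : P ∈ K)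
    (hmin : ∀ Q ∈ K, (∀ i, ∑ z, Q z * f z i = ∑ z, P z * f z i) → H P ≤ H Q)
    (ε : ℝ) (hε : 0 < ε) :
    ∃ θ : Fin d → ℝ, ∀ Q ∈ K,
      H P - ε < H Q - ∑ i, θ i * (∑ z, Q z * f z i - ∑ z, P z * f z i) := by
  classical
  let L : (Z → ℝ) → (Fin d → ℝ) := fun Q i => ∑ z, Q z * f z i
  have hLc : Continuous L := by fun_prop
  have hLadd : ∀ (a b : ℝ) Q R, L (a • Q + b • R) = a • L Q + b • L R := by
    intro a b Q R
    ext i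
    simp [L, Finset.mul_sum, ← Finset.sum_add_distrib]
    refine Finset.sum_congr rfl fun z _ => by ring
  let C : Set ((Fin d → ℝ) × ℝ) := {p | ∃ Q ∈ K, L Q = p.1 ∧ H Q ≤ p.2}
  have hCeq : C = (fun Q => (L Q, H Q)) '' K + (({0} : Set (Fin d → ℝ)) ×ˢ Set.Ici (0:ℝ)) := by
    ext ⟨x, s⟩
    rw [Set.mem_add]
    constructor
    · rintro ⟨Q, hQ, h1, h2⟩
      refine ⟨_, ⟨Q, hQ, rfl⟩, (0, s - H Q), ⟨rfl, ?_⟩, ?_⟩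
      · simpa using h2
      · simp at h1
        simp [h1]
    · rintro ⟨_, ⟨Q, hQ, rfl⟩, ⟨y, t⟩, ⟨hy, ht⟩, h⟩
      simp at hy ht h
      subst hy
      refine ⟨Q, hQ, ?_, ?_⟩
      · simpa using h.1
      · simp only; linarith [h.2]
  have hCcl : IsClosed C := by
    rw [hCeq]
    apply IsClosed.add_left_of_isCompact
    · exact isClosed_singleton.prod isClosed_Ici
    · exact hK.image_of_continuousOn (hLc.continuousOn.prodMk hHc)
  have hCcv : Convex ℝ C := by
    rintro ⟨x, s⟩ ⟨Q, hQ, h1, h2⟩ ⟨y, t⟩ ⟨R, hR, h3, h4⟩ a b ha hb hab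
    refine ⟨a • Q + b • R, hHx.1 hQ hR ha hb hab, ?_, ?_⟩
    · rw [hLadd, h1, h3]; rfl
    · refine (hHx.2 hQ hR ha hb hab).trans ?_
      simp at h2 h4 ⊢
      exact add_le_add (mul_le_mul_of_nonneg_left h2 ha) (mul_le_mul_of_nonneg_left h4 hb)
  have hnot : (L P, H P - ε) ∉ C := by
    rintro ⟨Q, hQ, h1, h2⟩
    have := hmin Q hQ (fun i => congrFun h1 i)
    simp at h2
    linarith
  obtain ⟨φ, v, hv, hφ⟩ := geometric_hahn_banach_point_closed hCcv hCcl hnot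
  let a : Fin d → ℝ := fun i => φ (Pi.single i 1, 0)
  let b : ℝ := φ (0, 1)
  have hrep : ∀ x s, φ (x, s) = ∑ i, x i * a i + s * b := by
    intro x s
    have h1 : (x, s) = ∑ i, x i • ((Pi.single i 1 : Fin d → ℝ), (0:ℝ)) + s • ((0 : Fin d → ℝ), (1:ℝ)) := by
      ext j
      · simp [Prod.fst_sum, Finset.sum_apply, Pi.single_apply]
      · simp [Prod.snd_sum]
    rw [h1, map_add, map_sum]
    simp only [map_smul, smul_eq_mul, a, b]
  have hb : 0 < b := by
    have := hv.trans (hφ (L P, H P) ⟨P, hP, rfl, le_rfl⟩)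
    rw [hrep, hrep] at this
    nlinarith
  refine ⟨fun i => - a i / b, fun Q hQ => ?_⟩
  have := hv.trans (hφ (L Q, H Q) ⟨Q, hQ, rfl, le_rfl⟩)
  rw [hrep, hrep] at this
  have h2 : ∑ i, (- a i / b) * (∑ z, Q z * f z i - ∑ z, P z * f z i)
      = (∑ i, L P i * a i - ∑ i, L Q i * a i) / b := by
    rw [← Finset.sum_sub_distrib, Finset.sum_div]
    refine Finset.sum_congr rfl fun i _ => ?_
    simp only [L]; field_simp; ring
  rw [h2]
  have h3 : (H P - ε) - H Q < - ((∑ i, L P i * a i - ∑ i, L Q i * a i) / b) := by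
    rw [← neg_div, lt_div_iff₀ hb]
    linarith
  linarith


theorem stmt_15 {Z : Type} [Fintype Z] [Nonempty Z] {d : ℕ}
    (β β' : Z → ℝ → ℝ)
    (hβc : ∀ z, ContinuousOn (β z) (Set.Ici 0))
    (hβsc : ∀ z, StrictConvexOn ℝ (Set.Ioi 0) (β z))
    (hβd : ∀ z x, 0 < x → HasDerivAt (β z) (β' z x) x)
    (hβ'bot : ∀ z, Filter.Tendsto (β' z) (nhdsWithin 0 (Set.Ioi 0)) Filter.atBot)
    (hβ'top : ∀ z, Filter.Tendsto (β' z) Filter.atTop Filter.atTop)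
    (e : Z → ℝ → ℝ)
    (he_pos : ∀ z r, 0 < e z r)
    (he_left : ∀ z r, β' z (e z r) = r)
    (he_right : ∀ z x, 0 < x → e z (β' z x) = x)
    (f : Z → Fin d → ℝ)
    (prob : Set (Z → ℝ))
    (hprob : prob = {P : Z → ℝ | (∀ z, 0 ≤ P z) ∧ (∑ z, P z) = 1})
    (μ : (Z → ℝ) → Fin d → ℝ)
    (hμ : ∀ P i, μ P i = ∑ z, P z * f z i)
    (H : (Z → ℝ) → ℝ)
    (hH : ∀ Q, H Q = ∑ z, β z (Q z))
    (Λ : (Fin d → ℝ) → ℝ)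
    (hΛ : ∀ θ, (∑ z, e z ((∑ i, θ i * f z i) - Λ θ)) = 1)
    (Pθ : (Fin d → ℝ) → Z → ℝ)
    (hPθ : ∀ θ z, Pθ θ z = e z ((∑ i, θ i * f z i) - Λ θ))
    (Bdiv : (Z → ℝ) → (Z → ℝ) → ℝ)
    (hBdiv : ∀ P Q, Bdiv P Q = ∑ z, (β z (P z) - β z (Q z) - β' z (Q z) * (P z - Q z)))
    (BE : (Z → ℝ) → ℝ)
    (hBE : ∀ P, BE P = ⨅ θ, Bdiv P (Pθ θ))
    (Pr : (Z → ℝ) → Z → ℝ)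
    (hPr : ∀ P ∈ prob, Pr P ∈ prob ∧ μ (Pr P) = μ P ∧
      (∀ Q ∈ prob, μ Q = μ P → H (Pr P) ≤ H Q) ∧
      (∀ Q ∈ prob, μ Q = μ P → H Q = H (Pr P) → Q = Pr P))
    (Pru : (Z → ℝ) → (Z → ℝ) → Z → ℝ)
    (hPru : ∀ u : Z → ℝ, (∑ z, u z) = 0 → u ≠ 0 → ∀ Q ∈ prob,
      Pru u Q ∈ prob ∧ (∃ t : ℝ, ∀ z, Pru u Q z - Q z = t * u z) ∧
      (∀ R ∈ prob, (∃ t : ℝ, ∀ z, R z - Q z = t * u z) → H (Pru u Q) ≤ H R) ∧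
      (∀ R ∈ prob, (∃ t : ℝ, ∀ z, R z - Q z = t * u z) → H R = H (Pru u Q) → R = Pru u Q))
    (Pplus : (Z → ℝ) → Set (Z → ℝ))
    (hPplus : ∀ u, Pplus u = {Q | Q ∈ prob ∧ 0 < ∑ z, (Q z - Pru u Q z) * u z})
    (Bu : (Z → ℝ) → (Z → ℝ) → ℝ)
    (hBu : ∀ u Q, Bu u Q = H Q - H (Pru u Q))
    (Bbar : (Z → ℝ) → ℝ)
    (hBbar : ∀ u, Bbar u = sSup (Bu u '' closure (Pplus u)))
    (N : Set (Z → ℝ))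
    (hNdef : N = {w : Z → ℝ | (∑ z, w z) = 0 ∧ ∀ i, (∑ z, w z * f z i) = 0})
    (u : Z → ℝ) (hu : u ∈ N) (hune : u ≠ 0)
    (P : Z → ℝ) (hPcl : P ∈ closure (Pplus u))
    (hPmax : Bu u P = Bbar u) :
    Bbar u ≤ BE P ∧ (BE P = Bbar u ↔ ∃ l : ℝ, 0 < l ∧ P - Pr P = l • u) := by
  have hprob' : prob = stdSimplex ℝ Z := hprob
  have hKc : IsCompact prob := hprob' ▸ isCompact_stdSimplex ℝ Z
  have hKx : Convex ℝ prob := hprob' ▸ convex_stdSimplex ℝ Z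
  have hmem : ∀ Q, Q ∈ prob ↔ (∀ z, 0 ≤ Q z) ∧ ∑ z, Q z = 1 := by
    intro Q; rw [hprob]; rfl
  have hβx : ∀ z, ConvexOn ℝ (Set.Ici 0) (β z) := fun z => aux_conv (hβc z) (hβsc z) (hβd z)
  have hHc : ContinuousOn H prob := by
    have : H = fun Q => ∑ z, β z (Q z) := funext hH
    rw [this]
    refine continuousOn_finsetSum _ fun z _ => ?_
    exact (hβc z).comp (continuous_apply z).continuousOn (fun Q hQ => ((hmem Q).1 hQ).1 z)
  have hHx : ConvexOn ℝ prob H := by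
    refine ⟨hKx, fun Q hQ R hR a b ha hb hab => ?_⟩
    simp only [hH, smul_eq_mul, Finset.mul_sum]
    rw [← Finset.sum_add_distrib]
    refine Finset.sum_le_sum fun z _ => ?_
    exact (hβx z).2 (((hmem Q).1 hQ).1 z) (((hmem R).1 hR).1 z) ha hb hab
  have hBform : ∀ Q ∈ prob, ∀ θ, Bdiv Q (Pθ θ) =
      H Q - H (Pθ θ) + ∑ i, θ i * (∑ z, Pθ θ z * f z i - ∑ z, Q z * f z i) := by
    intro Q hQ θ
    have e1 : ∀ z, β' z (Pθ θ z) = (∑ i, θ i * f z i) - Λ θ := by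
      intro z; rw [hPθ, he_left]
    have e2 : ∑ z, Pθ θ z = 1 := by simp only [hPθ]; exact hΛ θ
    have e3 := ((hmem Q).1 hQ).2
    have e4 : ∑ z, β' z (Pθ θ z) * (Q z - Pθ θ z) =
        ∑ i, θ i * (∑ z, Q z * f z i - ∑ z, Pθ θ z * f z i) := by
      simp only [e1, sub_mul]
      rw [Finset.sum_sub_distrib, ← Finset.mul_sum, Finset.sum_sub_distrib, e2, e3]
      simp only [← Finset.sum_sub_distrib, Finset.sum_mul, Finset.mul_sum]
      rw [Finset.sum_comm]
      simp only [sub_self, mul_zero, sub_zero]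
      refine Finset.sum_congr rfl fun i _ => Finset.sum_congr rfl fun z _ => by ring
    rw [hBdiv, Finset.sum_sub_distrib, Finset.sum_sub_distrib, e4, hH, hH]
    have e5 : ∑ i, θ i * (∑ z, Q z * f z i - ∑ z, Pθ θ z * f z i)
       = - ∑ i, θ i * (∑ z, Pθ θ z * f z i - ∑ z, Q z * f z i) := by
      rw [← Finset.sum_neg_distrib]
      refine Finset.sum_congr rfl fun i _ => by ring
    rw [e5]; ring
  have hPθpos : ∀ θ z, 0 < Pθ θ z := fun θ z => by rw [hPθ]; exact he_pos _ _
  have hPθmem : ∀ θ, Pθ θ ∈ prob := fun θ =>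
    (hmem _).2 ⟨fun z => (hPθpos θ z).le, by simp only [hPθ]; exact hΛ θ⟩
  have hBnn : ∀ Q ∈ prob, ∀ θ, 0 ≤ Bdiv Q (Pθ θ) := by
    intro Q hQ θ
    rw [hBdiv]
    exact Finset.sum_nonneg fun z _ =>
      aux_tan (hβx z) (hβd z) (((hmem Q).1 hQ).1 z) (hPθpos θ z)
  have hPlsub : Pplus u ⊆ prob := by rw [hPplus]; exact fun Q hQ => hQ.1
  have hclsub : closure (Pplus u) ⊆ prob := closure_minimal hPlsub hKc.isClosed
  have hP : P ∈ prob := hclsub hPcl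
  rw [hNdef] at hu
  obtain ⟨hu0, huf⟩ := hu
  obtain ⟨hRm, hRμ, hRmin, hRuniq⟩ := hPr P hP
  have hRμ' : ∀ i, ∑ z, Pr P z * f z i = ∑ z, P z * f z i := by
    intro i; rw [← hμ, ← hμ, hRμ]
  have hPyth : ∀ θ, Bdiv P (Pθ θ) = H P - H (Pr P) + Bdiv (Pr P) (Pθ θ) := by
    intro θ
    rw [hBform P hP, hBform _ hRm]
    simp only [hRμ']
    ring
  have hBEeq : BE P = H P - H (Pr P) := by
    have hbdd : BddBelow (Set.range fun θ => Bdiv P (Pθ θ)) :=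
      ⟨0, by rintro _ ⟨θ, rfl⟩; exact hBnn P hP θ⟩
    rw [hBE]
    apply le_antisymm
    · refine le_of_forall_pos_le_add fun ε hε => ?_
      obtain ⟨θ, hθ⟩ := aux_dual prob hKc f H hHc hHx (Pr P) hRm (by
        intro Q hQ h
        refine hRmin Q hQ ?_
        ext i
        rw [hμ, hμ, h, hRμ']) ε hε
      refine (ciInf_le hbdd θ).trans ?_
      have h1 := hθ _ (hPθmem θ)
      rw [hPyth, hBform _ hRm]
      linarith
    · refine le_ciInf fun θ => ?_
      rw [hPyth]
      linarith [hBnn _ hRm θ]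
  obtain ⟨hUm, ⟨t, ht⟩, hUmin, hUuniq⟩ := hPru u hu0 hune P hP
  have hUμ : μ (Pru u P) = μ P := by
    ext i
    rw [hμ, hμ]
    have : ∀ z, Pru u P z * f z i = P z * f z i + t * (u z * f z i) := by
      intro z
      have : Pru u P z = P z + t * u z := by linarith [ht z]
      rw [this]; ring
    simp only [this, Finset.sum_add_distrib, ← Finset.mul_sum, huf i]
    ring
  rw [← hPmax, hBu, hBEeq]
  refine ⟨by linarith [hRmin _ hUm hUμ], ?_, ?_⟩
  · intro h
    have hUR : Pru u P = Pr P := hRuniq _ hUm hUμ (by linarith)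
    have hBpos : 0 < Bu u P := by
      have hne : (Pplus u).Nonempty := closure_nonempty_iff.1 ⟨P, hPcl⟩
      obtain ⟨Q, hQ⟩ := hne
      have hQ' := hQ
      rw [hPplus] at hQ'
      obtain ⟨hQm, hQs⟩ := hQ'
      obtain ⟨-, -, h3, h4⟩ := hPru u hu0 hune Q hQm
      have hle := h3 Q hQm ⟨0, by simp⟩
      have hne : H Q ≠ H (Pru u Q) := by
        intro hh
        have := h4 Q hQm ⟨0, by simp⟩ hh
        rw [← this] at hQs
        simp at hQs
      have hlt : 0 < Bu u Q := by
        rw [hBu]; linarith [lt_of_le_of_ne hle (Ne.symm hne)]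
      rw [hPmax, hBbar]
      refine hlt.trans_le (le_csSup ?_ ⟨Q, subset_closure hQ, rfl⟩)
      obtain ⟨M, hM⟩ := hKc.bddAbove_image hHc
      obtain ⟨m, hm⟩ := hKc.bddBelow_image hHc
      refine ⟨M - m, ?_⟩
      rintro _ ⟨S, hS, rfl⟩
      have hSm := hclsub hS
      have a1 := hM ⟨S, hSm, rfl⟩
      have a2 := hm ⟨Pru u S, (hPru u hu0 hune S hSm).1, rfl⟩
      rw [hBu]
      linarith
    rw [hBu] at hBpos
    refine ⟨-t, ?_, ?_⟩
    swap
    · ext z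
      simp only [Pi.sub_apply, Pi.smul_apply, smul_eq_mul, ← hUR]
      linarith [ht z]
    by_contra hcon
    have ht0 : t ≠ 0 := by
      intro h0
      have : Pru u P = P := by
        ext z
        have := ht z
        rw [h0] at this
        linarith
      rw [this] at hBpos
      linarith
    have htpos : 0 < t := lt_of_le_of_ne (by linarith) (Ne.symm ht0)
    -- midpoint
    let T : (Z → ℝ) → (Z → ℝ) := fun Q => Q + (t / 2) • u
    have hTc : Continuous T := by fun_prop
    have hTmid : T P = (1/2 : ℝ) • P + (1/2 : ℝ) • Pru u P := by
      ext z
      simp [T]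
      linarith [ht z]
    have hTP : T P ∈ prob := by
      rw [hTmid]; exact hKx hP hUm (by norm_num) (by norm_num) (by norm_num)
    have hTlt : H (T P) < H P := by
      have := hHx.2 hP hUm (show (0:ℝ) ≤ 1/2 by norm_num) (show (0:ℝ) ≤ 1/2 by norm_num) (by norm_num)
      rw [← hTmid] at this
      simp only [smul_eq_mul] at this
      linarith
    have hev : ∀ᶠ Q in nhdsWithin P prob, T Q ∈ prob := by
      have h1 : ∀ z, ∀ᶠ Q in nhdsWithin P prob, 0 ≤ T Q z := by
        intro z
        have hPz := ((hmem P).1 hP).1 z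
        have hUz := ((hmem _).1 hUm).1 z
        have htz := ht z
        rcases hPz.eq_or_lt with h0 | h0
        · have huz : 0 ≤ t * u z := by linarith
          filter_upwards [self_mem_nhdsWithin] with Q hQ
          have := ((hmem Q).1 hQ).1 z
          simp [T]
          linarith
        · have : 0 < T P z := by
            simp [T]
            linarith
          have hc : Continuous fun Q => T Q z := (continuous_apply z).comp hTc
          have := (hc.tendsto P).eventually (lt_mem_nhds this)
          exact (this.filter_mono nhdsWithin_le_nhds).mono fun Q hQ => le_of_lt hQ
      have h2 := Filter.eventually_all.2 h1
      filter_upwards [h2, self_mem_nhdsWithin] with Q hQ hQm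
      refine (hmem _).2 ⟨hQ, ?_⟩
      simp [T, Finset.sum_add_distrib, ← Finset.mul_sum, hu0, ((hmem Q).1 hQm).2]
    have hle : nhdsWithin P (Pplus u) ≤ nhdsWithin P prob := nhdsWithin_mono _ hPlsub
    have hev' := hev.filter_mono hle
    have hl1 : Filter.Tendsto H (nhdsWithin P (Pplus u)) (nhds (H P)) := (hHc P hP).mono_left hle
    have hl2 : Filter.Tendsto (fun Q => H (T Q)) (nhdsWithin P (Pplus u)) (nhds (H (T P))) := by
      refine (hHc (T P) hTP).tendsto.comp ?_
      exact tendsto_nhdsWithin_iff.2 ⟨(hTc.tendsto P).mono_left nhdsWithin_le_nhds, hev'⟩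
    have hlt := hl2.eventually_lt hl1 hTlt
    have : (nhdsWithin P (Pplus u)).NeBot := mem_closure_iff_nhdsWithin_neBot.1 hPcl
    obtain ⟨Q, hQT, hQlt, hQ⟩ := (hev'.and (hlt.and self_mem_nhdsWithin)).exists
    rw [hPplus] at hQ
    obtain ⟨hQm, hQs⟩ := hQ
    obtain ⟨h1, ⟨s, hs⟩, h3, h4⟩ := hPru u hu0 hune Q hQm
    have hsneg : s < 0 := by
      have : ∑ z, (Q z - Pru u Q z) * u z = (-s) * ∑ z, u z * u z := by
        rw [Finset.mul_sum]
        refine Finset.sum_congr rfl fun z _ => ?_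
        rw [show Q z - Pru u Q z = -s * u z by linarith [hs z]]
        ring
      rw [this] at hQs
      have hnn : 0 ≤ ∑ z, u z * u z := Finset.sum_nonneg fun z _ => mul_self_nonneg _
      by_contra hh
      have : -s * ∑ z, u z * u z ≤ 0 := mul_nonpos_of_nonpos_of_nonneg (by linarith) hnn
      linarith
    have hUT := h3 (T Q) hQT ⟨t / 2, by intro z; simp [T]⟩
    have hseg : Q ∈ segment ℝ (Pru u Q) (T Q) := by
      have hpos : 0 < t / 2 - s := by linarith
      refine ⟨(t / 2) / (t / 2 - s), (-s) / (t / 2 - s), by positivity,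
        div_nonneg (by linarith) hpos.le, ?_, ?_⟩
      · rw [← add_div, div_eq_iff hpos.ne']
        ring
      · ext z
        have : Pru u Q z = Q z + s * u z := by linarith [hs z]
        simp only [T, Pi.add_apply, Pi.smul_apply, smul_eq_mul, this]
        have hne := hpos.ne'
        rw [div_mul_eq_mul_div (t / 2), div_mul_eq_mul_div (-s), ← add_div, div_eq_iff hne]
        ring
    have := hHx.le_max_of_mem_segment h1 hQT hseg
    rw [max_eq_right hUT] at this
    linarith
  · rintro ⟨l, hl, hlu⟩
    have : Pr P = Pru u P := by
      have h1 : ∃ t : ℝ, ∀ z, Pr P z - P z = t * u z := by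
        refine ⟨-l, fun z => ?_⟩
        have := congrFun hlu z
        simp at this
        linarith
      exact hUuniq _ hRm h1 (le_antisymm (hRmin _ hUm hUμ) (hUmin _ hRm h1))
    rw [this]
end
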